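/- arXiv:2407.14475 — 2 statements merged into one kernel-verified Lean document; each statement's English description precedes it below -/
import Mathlib

section
/- Let X be a two-dimensional polyhedral real Banach space, i.e., a two-dimensional Banach space whose closed unit ball has only finitely many extreme points. Then there exists an extreme point z of the closed unit ball B_X and a vector y ∈ S_X with z isosceles orthogonal to y such that J(X) = β(z) = ‖z + y‖ = ‖z − y‖. -/
/-!
Take a pair `(x, w)` in the unit ball maximizing `min ‖x + w‖ ‖x - w‖`, and norming functionals
`p` of `x + w` and `q` of `x - w`. Among the pairs `(a, b)` of the ball with `q (a - b) ≥ ‖x - w‖`,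
the maximum of `p (a + b)` is attained at an extreme point of this set, which is the intersection of
a product of two balls with a half-space. If neither `a` nor `b` were extreme in the ball, both
could be moved independently, and a single linear constraint cannot block every combination of two
independent motions; so `a` or `b` is extreme. For the same reason neither is an interior point when
the dimension is at least two. Call the extreme one `z` and the other one `v`, with
`‖z - v‖ ≤ ‖z + v‖` after changing the sign of `v`. On the arc of the unit sphere from `v` to `-z`,
an intermediate value argument gives a point `y` isosceles orthogonal to `z`, and the distance to
`z` does not decrease along this arc.
-/

open Set Metric Module

section ExtremePoints

variable {E F : Type*} [AddCommGroup E] [Module ℝ E] [AddCommGroup F] [Module ℝ F]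

theorem exists_ne_zero_add_sub_mem_of_notMem_extremePoints {s : Set E} (hs : Convex ℝ s) {x : E}
    (hx : x ∈ s) (hxe : x ∉ s.extremePoints ℝ) : ∃ u ≠ 0, x + u ∈ s ∧ x - u ∈ s := by
  simp only [mem_extremePoints_iff_left, hx, true_and] at hxe
  push Not at hxe
  obtain ⟨a, ha, b, hb, ⟨r, t, hr, ht, hrt, rfl⟩, hne⟩ := hxe
  obtain rfl : t = 1 - r := by linarith
  have hab : a - b ≠ 0 := by
    intro h
    rw [sub_eq_zero.mp h] at hne
    exact hne (by module)
  set m := min r (1 - r)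
  have hmr : m ≤ r := min_le_left _ _
  have hmr' : m ≤ 1 - r := min_le_right _ _
  have hm0 : 0 < m := lt_min hr ht
  refine ⟨m • (a - b), smul_ne_zero hm0.ne' hab, ?_, ?_⟩
  · convert hs ha hb (a := r + m) (b := 1 - (r + m)) (by linarith) (by linarith) (by ring) using 1
    module
  · convert hs ha hb (a := r - m) (b := 1 - (r - m)) (by linarith) (by linarith) (by ring) using 1
    module

theorem eq_zero_of_mem_extremePoints_of_add_sub_mem {s : Set E} {x u : E}
    (hx : x ∈ s.extremePoints ℝ) (hadd : x + u ∈ s) (hsub : x - u ∈ s) : u = 0 := by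
  have hmem : x ∈ openSegment ℝ (x + u) (x - u) :=
    ⟨1 / 2, 1 / 2, by norm_num, by norm_num, by norm_num, by module⟩
  simpa using (mem_extremePoints.mp hx).2 _ hadd _ hsub hmem |>.1

theorem exists_ne_zero_map_eq_zero_of_one_lt_finrank (hE : 1 < finrank ℝ E) (f : E →ₗ[ℝ] ℝ) :
    ∃ u ≠ 0, f u = 0 := by
  have : FiniteDimensional ℝ E := Module.finite_of_finrank_pos (by lia)
  obtain ⟨u, hu, hu0⟩ := (Submodule.ne_bot_iff _).mp <|
    f.ker_ne_bot_of_finrank_lt (by rwa [finrank_self])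
  exact ⟨u, hu0, hu⟩

variable {s : Set E} {t : Set F} {l : E × F →ₗ[ℝ] ℝ} {c : ℝ} {a u : E} {b v : F}

theorem eq_zero_of_mem_extremePoints_prod_inter_halfSpace
    (h : (a, b) ∈ (s ×ˢ t ∩ {p | c ≤ l p}).extremePoints ℝ) (hua : a + u ∈ s) (hus : a - u ∈ s)
    (hva : b + v ∈ t) (hvs : b - v ∈ t) (hl : l (u, v) = 0) : u = 0 ∧ v = 0 := by
  have hc : c ≤ l (a, b) := (extremePoints_subset h).2
  have huv : (u, v) = 0 := by
    refine eq_zero_of_mem_extremePoints_of_add_sub_mem h ⟨⟨hua, hva⟩, ?_⟩ ⟨⟨hus, hvs⟩, ?_⟩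
    · rwa [mem_ofPred_eq, map_add, hl, add_zero]
    · rwa [mem_ofPred_eq, map_sub, hl, sub_zero]
  exact Prod.mk_eq_zero.mp huv

theorem exists_abs_le_one_mul_add_mul_eq_zero (x y : ℝ) :
    ∃ α β : ℝ, (α ≠ 0 ∨ β ≠ 0) ∧ |α| ≤ 1 ∧ |β| ≤ 1 ∧ α * x + β * y = 0 := by
  by_cases hx : x = 0
  · exact ⟨1, 0, by simp [hx]⟩
  have hM : 0 < |x| + |y| := by positivity
  refine ⟨y / (|x| + |y|), -x / (|x| + |y|), .inr (div_ne_zero (neg_ne_zero.mpr hx) hM.ne'),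
    ?_, ?_, by ring⟩
  · rw [abs_div, abs_of_pos hM]
    exact div_le_one_of_le₀ (by simp) hM.le
  · rw [abs_div, abs_of_pos hM, abs_neg]
    exact div_le_one_of_le₀ (by simp) hM.le

theorem add_sub_smul_mem_of_abs_le_one (hs : Convex ℝ s) (hadd : a + u ∈ s) (hsub : a - u ∈ s)
    {r : ℝ} (hr : |r| ≤ 1) : a + r • u ∈ s ∧ a - r • u ∈ s := by
  obtain ⟨hr₁, hr₂⟩ := abs_le.mp hr
  constructor
  · convert hs hadd hsub (a := (1 + r) / 2) (b := (1 - r) / 2) (by linarith) (by linarith)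
      (by ring) using 1
    module
  · convert hs hadd hsub (a := (1 - r) / 2) (b := (1 + r) / 2) (by linarith) (by linarith)
      (by ring) using 1
    module

theorem fst_or_snd_mem_extremePoints_of_prod_inter_halfSpace (hs : Convex ℝ s) (ht : Convex ℝ t)
    (h : (a, b) ∈ (s ×ˢ t ∩ {p | c ≤ l p}).extremePoints ℝ) :
    a ∈ s.extremePoints ℝ ∨ b ∈ t.extremePoints ℝ := by
  by_contra! hab
  obtain ⟨ha, hb⟩ := (extremePoints_subset h).1
  obtain ⟨u, hu, hua, hus⟩ := exists_ne_zero_add_sub_mem_of_notMem_extremePoints hs ha hab.1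
  obtain ⟨v, hv, hva, hvs⟩ := exists_ne_zero_add_sub_mem_of_notMem_extremePoints ht hb hab.2
  obtain ⟨α, β, hαβ, hα, hβ, hzero⟩ := exists_abs_le_one_mul_add_mul_eq_zero (l (u, 0)) (l (0, v))
  have hl : l (α • u, β • v) = 0 := by
    have hsplit : (α • u, β • v) = α • (u, (0 : F)) + β • ((0 : E), v) := by simp
    rw [hsplit, map_add, map_smul, map_smul, smul_eq_mul, smul_eq_mul, hzero]
  obtain ⟨hua', hus'⟩ := add_sub_smul_mem_of_abs_le_one hs hua hus hα
  obtain ⟨hva', hvs'⟩ := add_sub_smul_mem_of_abs_le_one ht hva hvs hβ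
  have hzero' := eq_zero_of_mem_extremePoints_prod_inter_halfSpace h hua' hus' hva' hvs' hl
  simp only [smul_eq_zero, hu, hv, or_false] at hzero'
  tauto

end ExtremePoints

section Topological

variable {E F : Type*} [AddCommGroup E] [Module ℝ E] [AddCommGroup F] [Module ℝ F]
  [TopologicalSpace E]

theorem exists_ne_zero_map_eq_zero_add_sub_mem [ContinuousAdd E] [ContinuousSMul ℝ E]
    (hE : 1 < finrank ℝ E) (f : E →ₗ[ℝ] ℝ) {s : Set E} {a : E} (ha : a ∈ interior s) :
    ∃ u ≠ 0, f u = 0 ∧ a + u ∈ s ∧ a - u ∈ s := by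
  obtain ⟨u, hu, hfu⟩ := exists_ne_zero_map_eq_zero_of_one_lt_finrank hE f
  have hnear (w : E) : ∀ᶠ r : ℝ in nhds 0, a + r • w ∈ s := by
    have hcont : ContinuousAt (fun r : ℝ ↦ a + r • w) 0 := by fun_prop
    exact hcont (by simpa using mem_interior_iff_mem_nhds.mp ha)
  obtain ⟨r, ⟨hadd, hsub⟩, hr⟩ := ((((hnear u).and (hnear (-u))).filter_mono
    nhdsWithin_le_nhds).and (self_mem_nhdsWithin (s := {0}ᶜ))).exists
  exact ⟨r • u, smul_ne_zero hr hu, by simp [hfu], hadd, by simpa [sub_eq_add_neg] using hsub⟩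

theorem fst_notMem_interior_of_mem_extremePoints_prod_inter_halfSpace [ContinuousAdd E]
    [ContinuousSMul ℝ E] (hE : 1 < finrank ℝ E) {s : Set E} {t : Set F} {l : E × F →ₗ[ℝ] ℝ}
    {c : ℝ} {a : E} {b : F} (h : (a, b) ∈ (s ×ˢ t ∩ {p | c ≤ l p}).extremePoints ℝ) :
    a ∉ interior s := fun ha ↦ by
  obtain ⟨u, hu, hl, hua, hus⟩ :=
    exists_ne_zero_map_eq_zero_add_sub_mem hE (l ∘ₗ LinearMap.inl ℝ E F) ha
  have hb : b ∈ t := (extremePoints_subset h).1.2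
  exact hu (eq_zero_of_mem_extremePoints_prod_inter_halfSpace h hua hus
    (by simpa using hb) (by simpa using hb) hl).1

theorem snd_notMem_interior_of_mem_extremePoints_prod_inter_halfSpace [ContinuousAdd E]
    [ContinuousSMul ℝ E] (hE : 1 < finrank ℝ E) {s : Set F} {t : Set E} {l : F × E →ₗ[ℝ] ℝ}
    {c : ℝ} {a : F} {b : E} (h : (a, b) ∈ (s ×ˢ t ∩ {p | c ≤ l p}).extremePoints ℝ) :
    b ∉ interior t := fun hb ↦ by
  obtain ⟨v, hv, hl, hva, hvs⟩ :=
    exists_ne_zero_map_eq_zero_add_sub_mem hE (l ∘ₗ LinearMap.inr ℝ F E) hb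
  have ha : a ∈ s := (extremePoints_subset h).1.1
  exact hv (eq_zero_of_mem_extremePoints_prod_inter_halfSpace h (by simpa using ha)
    (by simpa using ha) hva hvs hl).2

theorem exists_mem_extremePoints_isMaxOn [T2Space E] [IsTopologicalAddGroup E] [ContinuousSMul ℝ E]
    [LocallyConvexSpace ℝ E] {s : Set E} (hs : IsCompact s) (hne : s.Nonempty)
    (f : StrongDual ℝ E) : ∃ e ∈ s.extremePoints ℝ, IsMaxOn f s e := by
  have hexp : IsExposed ℝ s (f.toExposed s) := ContinuousLinearMap.toExposed.isExposed
  obtain ⟨x, hx, hmax⟩ := hs.exists_isMaxOn hne f.continuous.continuousOn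
  obtain ⟨e, he⟩ := (hexp.isCompact hs).extremePoints_nonempty ⟨x, hx, hmax⟩
  exact ⟨e, hexp.isExtreme.extremePoints_subset_extremePoints he, (extremePoints_subset he).2⟩

end Topological

section NormedGroup

variable {X : Type*} [NormedAddCommGroup X]

/-- Isosceles orthogonality `x ⊥_I y`: the vectors `x + y` and `x - y` have the same norm. -/
def IsoscelesOrthogonal (x y : X) : Prop := ‖x + y‖ = ‖x - y‖

variable (X) in
/-- The James constant `J(X)`, for which `J(X) < 2` says that `X` is uniformly non-square. The set
of values is bounded above by `2`, and it is nonempty when `X` is a nontrivial real normed space. -/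
noncomputable def jamesConst : ℝ :=
  sSup {r : ℝ | ∃ x w : X, ‖x‖ = 1 ∧ ‖w‖ = 1 ∧ r = min ‖x + w‖ ‖x - w‖}

/-- The local James constant `β(z)`, the contribution of a single vector `z` to the James constant.
The definition accepts any `z`, but is meant for `‖z‖ = 1`. -/
noncomputable def localJamesConst (z : X) : ℝ :=
  sSup {r : ℝ | ∃ w : X, ‖w‖ = 1 ∧ r = min ‖z + w‖ ‖z - w‖}

theorem jamesConst_eq_of_forall_min_le {z y : X} (hz : ‖z‖ = 1) (hy : ‖y‖ = 1)
    (hzy : IsoscelesOrthogonal z y)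
    (hmax : ∀ a b : X, ‖a‖ = 1 → ‖b‖ = 1 → min ‖a + b‖ ‖a - b‖ ≤ ‖z + y‖) :
    jamesConst X = ‖z + y‖ := by
  refine IsGreatest.csSup_eq ⟨⟨z, y, hz, hy, (min_eq_left hzy.le).symm⟩, ?_⟩
  rintro _ ⟨a, b, ha, hb, rfl⟩
  exact hmax a b ha hb

theorem localJamesConst_eq_of_forall_min_le {z y : X} (hy : ‖y‖ = 1)
    (hzy : IsoscelesOrthogonal z y)
    (hmax : ∀ b : X, ‖b‖ = 1 → min ‖z + b‖ ‖z - b‖ ≤ ‖z + y‖) :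
    localJamesConst z = ‖z + y‖ := by
  refine IsGreatest.csSup_eq ⟨⟨y, hy, (min_eq_left hzy.le).symm⟩, ?_⟩
  rintro _ ⟨b, hb, rfl⟩
  exact hmax b hb

theorem exists_isMaxOn_min_norm_add_norm_sub [ProperSpace X] :
    ∃ x w : X, ‖x‖ ≤ 1 ∧ ‖w‖ ≤ 1 ∧ ∀ a b : X, ‖a‖ ≤ 1 → ‖b‖ ≤ 1 →
      min ‖a + b‖ ‖a - b‖ ≤ min ‖x + w‖ ‖x - w‖ := by
  obtain ⟨⟨x, w⟩, ⟨hx, hw⟩, hmax⟩ :=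
    ((isCompact_closedBall (0 : X) 1).prod (isCompact_closedBall (0 : X) 1)).exists_isMaxOn
      ⟨(0, 0), by simp⟩ (f := fun p ↦ min ‖p.1 + p.2‖ ‖p.1 - p.2‖) (by fun_prop)
  exact ⟨x, w, by simpa using hx, by simpa using hw, fun a b ha hb ↦
    hmax (show (a, b) ∈ _ from ⟨by simpa using ha, by simpa using hb⟩)⟩

end NormedGroup

section NormedSpace

variable {X : Type*} [NormedAddCommGroup X] [NormedSpace ℝ X]

theorem exists_strongDual_apply_eq_norm_forall_le_norm (x : X) :
    ∃ f : StrongDual ℝ X, f x = ‖x‖ ∧ ∀ v, f v ≤ ‖v‖ := by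
  obtain ⟨f, hf, hfx⟩ := exists_dual_vector'' ℝ x
  refine ⟨f, hfx, fun v ↦ (le_abs_self _).trans ?_⟩
  simpa using f.le_of_opNorm_le hf v

theorem exists_norm_eq_one_one_le_norm_add_norm_sub (hX : 1 < finrank ℝ X) {x : X}
    (hx : ‖x‖ = 1) : ∃ y : X, ‖y‖ = 1 ∧ 1 ≤ ‖x + y‖ ∧ 1 ≤ ‖x - y‖ := by
  obtain ⟨f, hfx, hf⟩ := exists_strongDual_apply_eq_norm_forall_le_norm x
  obtain ⟨u, hu, hfu⟩ := exists_ne_zero_map_eq_zero_of_one_lt_finrank hX f.toLinearMap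
  have hfu' : f u = 0 := hfu
  refine ⟨‖u‖⁻¹ • u, by simpa using norm_smul_inv_norm (𝕜 := ℝ) hu, ?_, ?_⟩
  · simpa [hfx, hfu', hx] using hf (x + ‖u‖⁻¹ • u)
  · simpa [hfx, hfu', hx] using hf (x - ‖u‖⁻¹ • u)

theorem norm_eq_one_of_notMem_interior_closedBall {x : X} (hx : x ∈ closedBall (0 : X) 1)
    (hxi : x ∉ interior (closedBall (0 : X) 1)) : ‖x‖ = 1 := by
  rw [interior_closedBall _ one_ne_zero, mem_ball_zero_iff, not_lt] at hxi
  exact (mem_closedBall_zero_iff.mp hx).antisymm hxi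

theorem exists_extremePoint_norm_add_le_norm_sub_le (hX : 1 < finrank ℝ X) {x w : X}
    (hx : ‖x‖ ≤ 1) (hw : ‖w‖ ≤ 1) :
    ∃ a b : X, ‖a‖ = 1 ∧ ‖b‖ = 1 ∧ ‖x + w‖ ≤ ‖a + b‖ ∧ ‖x - w‖ ≤ ‖a - b‖ ∧
      (a ∈ (closedBall (0 : X) 1).extremePoints ℝ ∨
        b ∈ (closedBall (0 : X) 1).extremePoints ℝ) := by
  have : FiniteDimensional ℝ X := Module.finite_of_finrank_pos (by lia)
  have : ProperSpace X := FiniteDimensional.proper_real X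
  obtain ⟨p, hpxw, hp⟩ := exists_strongDual_apply_eq_norm_forall_le_norm (x + w)
  obtain ⟨q, hqxw, hq⟩ := exists_strongDual_apply_eq_norm_forall_le_norm (x - w)
  let P : StrongDual ℝ (X × X) := p ∘L (.fst ℝ X X + .snd ℝ X X)
  let Q : StrongDual ℝ (X × X) := q ∘L (.fst ℝ X X - .snd ℝ X X)
  let K : Set (X × X) :=
    closedBall 0 1 ×ˢ closedBall 0 1 ∩ {y | ‖x - w‖ ≤ Q.toLinearMap y}
  have hK : IsCompact K := ((isCompact_closedBall _ _).prod (isCompact_closedBall _ _)).inter_right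
    (isClosed_le continuous_const Q.continuous)
  have hxwK : (x, w) ∈ K := ⟨⟨by simpa using hx, by simpa using hw⟩, hqxw.ge⟩
  obtain ⟨⟨a, b⟩, hab, hmax⟩ := exists_mem_extremePoints_isMaxOn hK ⟨_, hxwK⟩ P
  obtain ⟨⟨ha, hb⟩, hQ⟩ := extremePoints_subset hab
  refine ⟨a, b, ?_, ?_, ?_, ?_, ?_⟩
  · exact norm_eq_one_of_notMem_interior_closedBall ha
      (fst_notMem_interior_of_mem_extremePoints_prod_inter_halfSpace hX hab)
  · exact norm_eq_one_of_notMem_interior_closedBall hb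
      (snd_notMem_interior_of_mem_extremePoints_prod_inter_halfSpace hX hab)
  · calc ‖x + w‖ = p (x + w) := hpxw.symm
      _ ≤ p (a + b) := hmax hxwK
      _ ≤ ‖a + b‖ := hp _
  · exact hQ.trans (hq _)
  · exact fst_or_snd_mem_extremePoints_of_prod_inter_halfSpace (convex_closedBall _ _)
      (convex_closedBall _ _) hab

theorem exists_extremePoint_min_norm_add_norm_sub_le (hX : 1 < finrank ℝ X) {x w : X}
    (hx : ‖x‖ ≤ 1) (hw : ‖w‖ ≤ 1) :
    ∃ z ∈ (closedBall (0 : X) 1).extremePoints ℝ, ∃ v : X, ‖z‖ = 1 ∧ ‖v‖ = 1 ∧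
      min ‖x + w‖ ‖x - w‖ ≤ min ‖z + v‖ ‖z - v‖ := by
  obtain ⟨a, b, ha, hb, hadd, hsub, hae | hbe⟩ :=
    exists_extremePoint_norm_add_le_norm_sub_le hX hx hw
  · exact ⟨a, hae, b, ha, hb, min_le_min hadd hsub⟩
  · refine ⟨b, hbe, a, hb, ha, min_le_min ?_ ?_⟩
    · rwa [add_comm b]
    · rwa [norm_sub_rev b]

theorem norm_sub_le_norm_sub_of_smul_mem_segment {z w y : X} (hw : ‖w‖ = 1) (hy : ‖y‖ = 1)
    (hz : ‖z‖ ≤ 1) {m : ℝ} (hm : 0 ≤ m) (hmem : m • w ∈ segment ℝ z y) :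
    ‖z - w‖ ≤ ‖z - y‖ := by
  have hnorm : ‖m • w‖ = m := by rw [norm_smul, hw, Real.norm_of_nonneg hm, mul_one]
  have hm1 : m ≤ 1 := by
    have hball := (convex_closedBall (0 : X) 1).segment_subset (by simpa using hz)
      (by simp [hy]) hmem
    rwa [mem_closedBall_zero_iff, hnorm] at hball
  have hmw : dist (m • w) w ≤ dist (m • w) y :=
    calc dist (m • w) w = ‖(1 - m) • w‖ := by rw [dist_comm, dist_eq_norm, sub_smul, one_smul]
      _ = 1 - m := by rw [norm_smul, hw, Real.norm_of_nonneg (by linarith), mul_one]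
      _ = ‖y‖ - ‖m • w‖ := by rw [hy, hnorm]
      _ ≤ dist (m • w) y := by rw [dist_comm, dist_eq_norm]; exact norm_sub_norm_le _ _
  calc ‖z - w‖ = dist z w := (dist_eq_norm _ _).symm
    _ ≤ dist z (m • w) + dist (m • w) w := dist_triangle _ _ _
    _ ≤ dist z (m • w) + dist (m • w) y := by gcongr
    _ = ‖z - y‖ := by rw [dist_add_dist_of_mem_segment hmem, dist_eq_norm]

theorem sub_smul_sub_smul_ne_zero {z w : X} (hz : ‖z‖ = 1) (hw : ‖w‖ = 1) (hne : w ≠ z) {t : ℝ}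
    (ht : t ∈ Icc (0 : ℝ) 1) : (1 - t) • w - t • z ≠ 0 := fun h ↦ by
  have hsmul : (1 - t) • w = t • z := sub_eq_zero.mp h
  have hnorm : 1 - t = t := by
    simpa [norm_smul, hz, hw, abs_of_nonneg ht.1, abs_of_nonneg (sub_nonneg.mpr ht.2)]
      using congrArg norm hsmul
  rw [hnorm] at hsmul
  exact hne (smul_right_injective X (by linarith : t ≠ 0) hsmul)

theorem exists_isoscelesOrthogonal_smul_mem_segment {z w : X} (hz : ‖z‖ = 1) (hw : ‖w‖ = 1)
    (hne : w ≠ z) (hle : ‖z - w‖ ≤ ‖z + w‖) :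
    ∃ y : X, ‖y‖ = 1 ∧ IsoscelesOrthogonal z y ∧ ∃ m : ℝ, 0 ≤ m ∧ m • w ∈ segment ℝ z y := by
  let c : ℝ → X := fun t ↦ (1 - t) • w - t • z
  let y : ℝ → X := fun t ↦ ‖c t‖⁻¹ • c t
  have hc : ∀ t ∈ Icc (0 : ℝ) 1, c t ≠ 0 := fun t ↦ sub_smul_sub_smul_ne_zero hz hw hne
  have hccont : Continuous c := by fun_prop
  have hycont : ContinuousOn y (Icc 0 1) :=
    (hccont.norm.continuousOn.inv₀ fun t ht ↦ norm_ne_zero_iff.mpr (hc t ht)).smul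
      hccont.continuousOn
  have hy0 : y 0 = w := by simp [y, c, hw]
  have hy1 : y 1 = -z := by simp [y, c, hz]
  obtain ⟨t, ht, hyt⟩ := intermediate_value_Icc' zero_le_one
    (show ContinuousOn (fun t ↦ ‖z + y t‖ - ‖z - y t‖) (Icc 0 1) by fun_prop)
    (show (0 : ℝ) ∈ Icc _ _ from ⟨by simp [hy1], by simpa [hy0] using hle⟩)
  have hpos : 0 < ‖c t‖ := norm_pos_iff.mpr (hc t ht)
  have hsum : 0 < ‖c t‖ + t := add_pos_of_pos_of_nonneg hpos ht.1
  refine ⟨y t, by simpa using norm_smul_inv_norm (𝕜 := ℝ) (hc t ht), sub_eq_zero.mp hyt,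
    (1 - t) / (‖c t‖ + t), div_nonneg (sub_nonneg.mpr ht.2) hsum.le,
    t / (‖c t‖ + t), ‖c t‖ / (‖c t‖ + t), div_nonneg ht.1 hsum.le, by positivity,
    by field_simp; ring, ?_⟩
  have hcy : ‖c t‖ • y t = (1 - t) • w - t • z := smul_inv_smul₀ hpos.ne' (c t)
  rw [div_eq_inv_mul, div_eq_inv_mul, div_eq_inv_mul, mul_smul, mul_smul, mul_smul, hcy, ← smul_add,
    add_sub_cancel]

theorem exists_isoscelesOrthogonal_min_le {z v : X} (hz : ‖z‖ = 1) (hv : ‖v‖ = 1)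
    (hpos : 0 < min ‖z + v‖ ‖z - v‖) :
    ∃ y : X, ‖y‖ = 1 ∧ IsoscelesOrthogonal z y ∧ min ‖z + v‖ ‖z - v‖ ≤ ‖z + y‖ := by
  wlog hle : ‖z - v‖ ≤ ‖z + v‖ generalizing v
  · simpa [min_comm, ← sub_eq_add_neg] using this (v := -v) (by simpa using hv)
      (by simpa [min_comm, ← sub_eq_add_neg] using hpos)
      (by simpa [← sub_eq_add_neg] using (not_le.mp hle).le)
  have hne : v ≠ z := by
    rintro rfl
    simp at hpos
  obtain ⟨y, hy, hzy, m, hm, hmem⟩ := exists_isoscelesOrthogonal_smul_mem_segment hz hv hne hle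
  refine ⟨y, hy, hzy, (min_le_right _ _).trans ?_⟩
  exact (norm_sub_le_norm_sub_of_smul_mem_segment hv hy hz.le hm hmem).trans hzy.ge

theorem exists_extremePoint_isoscelesOrthogonal_forall_min_le (hX : 1 < finrank ℝ X) :
    ∃ z ∈ (closedBall (0 : X) 1).extremePoints ℝ, ∃ y : X, ‖z‖ = 1 ∧ ‖y‖ = 1 ∧
      IsoscelesOrthogonal z y ∧
      ∀ a b : X, ‖a‖ = 1 → ‖b‖ = 1 → min ‖a + b‖ ‖a - b‖ ≤ ‖z + y‖ := by
  have : FiniteDimensional ℝ X := Module.finite_of_finrank_pos (by lia)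
  have : ProperSpace X := FiniteDimensional.proper_real X
  obtain ⟨x, w, hx, hw, hmax⟩ := exists_isMaxOn_min_norm_add_norm_sub (X := X)
  obtain ⟨z, hze, v, hz, hv, hzv⟩ := exists_extremePoint_min_norm_add_norm_sub_le hX hx hw
  have hpos : 0 < min ‖z + v‖ ‖z - v‖ := by
    obtain ⟨u, hu, hadd, hsub⟩ := exists_norm_eq_one_one_le_norm_add_norm_sub hX hz
    calc 0 < 1 := one_pos
      _ ≤ min ‖z + u‖ ‖z - u‖ := le_min hadd hsub
      _ ≤ min ‖x + w‖ ‖x - w‖ := hmax z u hz.le hu.le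
      _ ≤ min ‖z + v‖ ‖z - v‖ := hzv
  obtain ⟨y, hy, hzy, hle⟩ := exists_isoscelesOrthogonal_min_le hz hv hpos
  exact ⟨z, hze, y, hz, hy, hzy, fun a b ha hb ↦
    ((hmax a b ha.le hb.le).trans hzv).trans hle⟩

theorem stmt9_general (hX : 1 < finrank ℝ X) :
    ∃ z ∈ (closedBall (0 : X) 1).extremePoints ℝ, ∃ y : X, ‖y‖ = 1 ∧ IsoscelesOrthogonal z y ∧
      jamesConst X = localJamesConst z ∧ localJamesConst z = ‖z + y‖ := by
  obtain ⟨z, hze, y, hz, hy, hzy, hmax⟩ :=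
    exists_extremePoint_isoscelesOrthogonal_forall_min_le hX
  have hJ := jamesConst_eq_of_forall_min_le hz hy hzy hmax
  have hβ := localJamesConst_eq_of_forall_min_le hy hzy (hmax z · hz)
  exact ⟨z, hze, y, hy, hzy, hJ.trans hβ.symm, hβ⟩

end NormedSpace

/-- In a two-dimensional polyhedral real Banach space (the closed unit ball has only
finitely many extreme points), there exist an extreme point `z` of the closed unit ball and a unit
vector `y` with `z ⊥_I y` such that `J(X) = β(z) = ‖z + y‖ = ‖z - y‖`. -/
theorem stmt9 {X : Type*} [NormedAddCommGroup X] [NormedSpace ℝ X] [CompleteSpace X]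
    (hdim : Module.finrank ℝ X = 2)
    (hpoly : (Set.extremePoints ℝ (Metric.closedBall (0 : X) 1)).Finite) :
    ∃ z ∈ Set.extremePoints ℝ (Metric.closedBall (0 : X) 1), ∃ y : X, ‖y‖ = 1 ∧
      ‖z + y‖ = ‖z - y‖ ∧
      sSup {r : ℝ | ∃ x w : X, ‖x‖ = 1 ∧ ‖w‖ = 1 ∧ r = min ‖x + w‖ ‖x - w‖}
        = sSup {r : ℝ | ∃ w : X, ‖w‖ = 1 ∧ r = min ‖z + w‖ ‖z - w‖} ∧
      sSup {r : ℝ | ∃ w : X, ‖w‖ = 1 ∧ r = min ‖z + w‖ ‖z - w‖} = ‖z + y‖ :=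
  stmt9_general (by lia)
end

section
/- Let X be ℝ² equipped with the norm ‖(x, y)‖ = max{|x|, |2x + y|/3, |2x − 3y|/5}, whose unit ball is the hexagon with vertices ±(1, −1), ±(1, 1), ±(1/2, 2). Then β((1, −1)) = 22/13, β((1, 1)) = 22/17, β((1/2, 2)) = 11/7, and consequently J(X) = 22/13. -/
/-!
A hexagonal norm on a plane is `max |f| (max |g| |h|)` for three functionals which, up to signs,
satisfy one relation `a * f + b * g + c * h = 0` with positive weights. If `x` and `y` lie in the
unit ball, then expanding `a * f (x + y) ± b * g (x - y)` and collapsing either the two terms in `x`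
or the two terms in `y` through the relation gives `a * |f (x + y)| + b * |g (x - y)| ≤ a + b + c`,
so that `|f (x + y)|` and `|g (x - y)|` cannot both exceed `(a + b + c) / (a + b)`. The absolute
value of a single functional cannot exceed `1` at both `x + y` and `x - y`, and the bound is
attained at the vertex where `f = 1` and `g = -1`. For the given norm the relation is
`8 * x = 9 * ((2 * x + y) / 3) + 5 * ((2 * x - 3 * y) / 5)`, whence the values `22 / 13`, `22 / 17`
and `22 / 14`.
-/

section JamesConstant

/-- The local James constant `β(x)`, at an arbitrary point `x` rather than only on the unit
sphere. -/
noncomputable def localJamesConstant {X : Type*} [SeminormedAddCommGroup X] (x : X) : ℝ :=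
  sSup {r : ℝ | ∃ y : X, ‖y‖ = 1 ∧ r = min ‖x + y‖ ‖x - y‖}

/-- The James constant `J(X)`, with the value `0` when the unit sphere is empty. -/
noncomputable def jamesConstant (X : Type*) [SeminormedAddCommGroup X] : ℝ :=
  sSup {r : ℝ | ∃ x y : X, ‖x‖ = 1 ∧ ‖y‖ = 1 ∧ r = min ‖x + y‖ ‖x - y‖}

variable {X : Type*} [SeminormedAddCommGroup X] {t : ℝ}

theorem localJamesConstant_eq_of_forall_le_of_exists_ge {x : X}
    (hle : ∀ y : X, ‖y‖ = 1 → min ‖x + y‖ ‖x - y‖ ≤ t)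
    (hge : ∃ y : X, ‖y‖ = 1 ∧ t ≤ min ‖x + y‖ ‖x - y‖) : localJamesConstant x = t := by
  obtain ⟨y, hy, hty⟩ := hge
  refine IsGreatest.csSup_eq ⟨⟨y, hy, hty.antisymm (hle y hy)⟩, ?_⟩
  rintro _ ⟨z, hz, rfl⟩
  exact hle z hz

theorem jamesConstant_eq_of_forall_le_of_exists_ge
    (hle : ∀ x y : X, ‖x‖ = 1 → ‖y‖ = 1 → min ‖x + y‖ ‖x - y‖ ≤ t)
    (hge : ∃ x y : X, ‖x‖ = 1 ∧ ‖y‖ = 1 ∧ t ≤ min ‖x + y‖ ‖x - y‖) : jamesConstant X = t := by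
  obtain ⟨x, y, hx, hy, hxy⟩ := hge
  refine IsGreatest.csSup_eq ⟨⟨x, y, hx, hy, hxy.antisymm (hle x y hx hy)⟩, ?_⟩
  rintro _ ⟨u, v, hu, hv, rfl⟩
  exact hle u v hu hv

end JamesConstant

theorem min_abs_add_abs_sub_le_max {G : Type*} [AddCommGroup G] [LinearOrder G]
    [IsOrderedAddMonoid G] {p q : G} : min |p + q| |p - q| ≤ max |p| |q| := by
  grind

theorem abs_mul_add_mul_add_mul_le_add {R : Type*} [Ring R] [LinearOrder R] [IsOrderedRing R]
    {a b c p q r : R} (ha : 0 ≤ a) (hb : 0 ≤ b) (hc : 0 ≤ c)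
    (hp : |p| ≤ 1) (hq : |q| ≤ 1) (hr : |r| ≤ 1) :
    |a * p + b * q + c * r| ≤ a + b + c :=
  calc |a * p + b * q + c * r| ≤ |a * p| + |b * q| + |c * r| := abs_add_three _ _ _
    _ = a * |p| + b * |q| + c * |r| := by
      rw [abs_mul, abs_mul, abs_mul, abs_of_nonneg ha, abs_of_nonneg hb, abs_of_nonneg hc]
    _ ≤ a + b + c := add_le_add_three (mul_le_of_le_one_right ha hp)
      (mul_le_of_le_one_right hb hq) (mul_le_of_le_one_right hc hr)

/-- The norm whose unit ball is the hexagon `|f| ≤ 1`, `|g| ≤ 1`, `|h| ≤ 1` in a plane (up to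
vectors of norm zero), which degenerates to a parallelogram when one weight is at least the sum of
the other two. The signs of the functionals are chosen so that the relation between them has
positive weights; the values of `(f, g, h)` are then exactly the triples satisfying it. -/
structure IsHexagonalNorm {X : Type*} [SeminormedAddCommGroup X] [Module ℝ X]
    (f g h : Module.Dual ℝ X) (a b c : ℝ) : Prop where
  norm_eq : ∀ x, ‖x‖ = max |f x| (max |g x| |h x|)
  pos_fst : 0 < a
  pos_snd : 0 < b
  pos_trd : 0 < c
  relation : ∀ x, a * f x + b * g x + c * h x = 0
  exists_eq : ∀ p q r, a * p + b * q + c * r = 0 → ∃ x, f x = p ∧ g x = q ∧ h x = r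

namespace IsHexagonalNorm

variable {X : Type*} [SeminormedAddCommGroup X] [Module ℝ X]
  {f g h : Module.Dual ℝ X} {a b c t : ℝ} {u x y : X}

theorem rotate (H : IsHexagonalNorm f g h a b c) : IsHexagonalNorm g h f b c a where
  norm_eq x := by rw [H.norm_eq, max_comm, max_assoc]
  pos_fst := H.pos_snd
  pos_snd := H.pos_trd
  pos_trd := H.pos_fst
  relation x := by linarith [H.relation x]
  exists_eq p q r hpqr := by
    obtain ⟨x, hr, hp, hq⟩ := H.exists_eq r p q (by linarith)
    exact ⟨x, hp, hq, hr⟩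

theorem swap (H : IsHexagonalNorm f g h a b c) : IsHexagonalNorm g f h b a c where
  norm_eq x := by rw [H.norm_eq, max_left_comm]
  pos_fst := H.pos_snd
  pos_snd := H.pos_fst
  pos_trd := H.pos_trd
  relation x := by linarith [H.relation x]
  exists_eq p q r hpqr := by
    obtain ⟨x, hq, hp, hr⟩ := H.exists_eq q p r (by linarith)
    exact ⟨x, hp, hq, hr⟩

theorem abs_apply_le_norm (H : IsHexagonalNorm f g h a b c) (x : X) : |f x| ≤ ‖x‖ :=
  H.norm_eq x ▸ le_max_left _ _

theorem min_abs_self_le_one (H : IsHexagonalNorm f g h a b c)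
    (hx : ‖x‖ ≤ 1) (hy : ‖y‖ ≤ 1) : min |f (x + y)| |f (x - y)| ≤ 1 := by
  rw [map_add, map_sub]
  exact min_abs_add_abs_sub_le_max.trans
    (max_le ((H.abs_apply_le_norm x).trans hx) ((H.abs_apply_le_norm y).trans hy))

theorem mul_abs_add_mul_abs_le (H : IsHexagonalNorm f g h a b c)
    (hx : ‖x‖ ≤ 1) (hy : ‖y‖ ≤ 1) : a * |f (x + y)| + b * |g (x - y)| ≤ a + b + c := by
  have ha := H.pos_fst.le
  have hb := H.pos_snd.le
  have hc := H.pos_trd.le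
  have hf := H.abs_apply_le_norm
  have hg := H.rotate.abs_apply_le_norm
  have hh := H.rotate.rotate.abs_apply_le_norm
  have collapse_x : |a * f (x + y) + b * g (x - y)| ≤ a + b + c :=
    calc |a * f (x + y) + b * g (x - y)| = |a * f y + b * (-g y) + c * (-h x)| := by
          congr 1
          rw [map_add, map_sub]
          linear_combination H.relation x
      _ ≤ a + b + c := abs_mul_add_mul_add_mul_le_add ha hb hc ((hf y).trans hy)
          ((abs_neg (g y)).trans_le ((hg y).trans hy)) ((abs_neg (h x)).trans_le ((hh x).trans hx))
  have collapse_y : |a * f (x + y) - b * g (x - y)| ≤ a + b + c :=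
    calc |a * f (x + y) - b * g (x - y)| = |a * f x + b * (-g x) + c * (-h y)| := by
          congr 1
          rw [map_add, map_sub]
          linear_combination H.relation y
      _ ≤ a + b + c := abs_mul_add_mul_add_mul_le_add ha hb hc ((hf x).trans hx)
          ((abs_neg (g x)).trans_le ((hg x).trans hx)) ((abs_neg (h y)).trans_le ((hh y).trans hy))
  rw [abs_le] at collapse_x collapse_y
  rcases abs_choice (f (x + y)) with hF | hF <;> rcases abs_choice (g (x - y)) with hG | hG <;>
    rw [hF, hG] <;> linarith

theorem min_abs_pair_le (H : IsHexagonalNorm f g h a b c) (hx : ‖x‖ ≤ 1) (hy : ‖y‖ ≤ 1)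
    (ht : a + b + c ≤ t * (a + b)) : min |f (x + y)| |g (x - y)| ≤ t := by
  have ha := H.pos_fst
  have hb := H.pos_snd
  by_contra! hlt
  rw [lt_min_iff] at hlt
  have hf : a * t < a * |f (x + y)| := mul_lt_mul_of_pos_left hlt.1 ha
  have hg : b * t < b * |g (x - y)| := mul_lt_mul_of_pos_left hlt.2 hb
  linarith [H.mul_abs_add_mul_abs_le hx hy]

theorem min_norm_le_of_pairs (H : IsHexagonalNorm f g h a b c) (hx : ‖x‖ ≤ 1) (hy : ‖y‖ ≤ 1)
    (ht : 1 ≤ t) (hfg : a + b + c ≤ t * (a + b)) (hgh : b + c + a ≤ t * (b + c))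
    (hfh : a + c + b ≤ t * (a + c)) : min ‖x + y‖ ‖x - y‖ ≤ t := by
  have Hgh := H.rotate
  have Hhf := Hgh.rotate
  have diagonal_f := (H.min_abs_self_le_one hx hy).trans ht
  have diagonal_g := (Hgh.min_abs_self_le_one hx hy).trans ht
  have diagonal_h := (Hhf.min_abs_self_le_one hx hy).trans ht
  simp only [H.norm_eq (x + y), H.norm_eq (x - y), min_max_distrib_left, min_max_distrib_right,
    max_le_iff]
  exact ⟨⟨diagonal_f, H.swap.min_abs_pair_le hx hy (by linarith),
      Hhf.min_abs_pair_le hx hy (by linarith)⟩,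
    ⟨H.min_abs_pair_le hx hy hfg, diagonal_g, Hgh.swap.min_abs_pair_le hx hy (by linarith)⟩,
    ⟨Hhf.swap.min_abs_pair_le hx hy hfh, Hgh.min_abs_pair_le hx hy hgh, diagonal_h⟩⟩

theorem min_norm_le_of_abs_apply_le (H : IsHexagonalNorm f g h a b c) (hx : ‖x‖ ≤ 1)
    (hy : ‖y‖ ≤ 1) (ht : 1 ≤ t) (hfg : a + b + c ≤ t * (a + b)) (hadd : |h (x + y)| ≤ t)
    (hsub : |h (x - y)| ≤ t) : min ‖x + y‖ ‖x - y‖ ≤ t := by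
  have diagonal_f := (H.min_abs_self_le_one hx hy).trans ht
  have diagonal_g := (H.swap.min_abs_self_le_one hx hy).trans ht
  simp only [H.norm_eq (x + y), H.norm_eq (x - y), min_max_distrib_left, min_max_distrib_right,
    max_le_iff]
  exact ⟨⟨diagonal_f, H.swap.min_abs_pair_le hx hy (by linarith), min_le_of_left_le hadd⟩,
    ⟨H.min_abs_pair_le hx hy hfg, diagonal_g, min_le_of_left_le hadd⟩,
    ⟨min_le_of_right_le hsub, min_le_of_right_le hsub, min_le_of_left_le hadd⟩⟩

theorem one_le_add_div_add (H : IsHexagonalNorm f g h a b c) : 1 ≤ (a + b + c) / (a + b) := by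
  rw [one_le_div₀ (add_pos H.pos_fst H.pos_snd)]
  linarith [H.pos_trd]

theorem min_norm_le (H : IsHexagonalNorm f g h a b c) (hac : a ≤ c) (hbc : b ≤ c)
    (hx : ‖x‖ ≤ 1) (hy : ‖y‖ ≤ 1) : min ‖x + y‖ ‖x - y‖ ≤ (a + b + c) / (a + b) := by
  have hab : 0 < a + b := add_pos H.pos_fst H.pos_snd
  have ht := H.one_le_add_div_add
  have hfg : a + b + c = (a + b + c) / (a + b) * (a + b) := (div_mul_cancel₀ _ hab.ne').symm
  have hgh := mul_le_mul_of_nonneg_left (show a + b ≤ b + c by linarith) (zero_le_one.trans ht)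
  have hfh := mul_le_mul_of_nonneg_left (show a + b ≤ a + c by linarith) (zero_le_one.trans ht)
  exact H.min_norm_le_of_pairs hx hy ht hfg.le (by linarith) (by linarith)

theorem abs_apply_of_vertex (H : IsHexagonalNorm f g h a b c) (hf : f u = 1) (hg : g u = -1) :
    |h u| = |a - b| / c := by
  have hc := H.pos_trd
  have hu : h u = -((a - b) / c) := by
    field_simp
    linear_combination H.relation u - a * hf - b * hg
  rw [hu, abs_neg, abs_div, abs_of_pos hc]

theorem norm_eq_one_of_vertex (H : IsHexagonalNorm f g h a b c) (hf : f u = 1) (hg : g u = -1)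
    (hab : |a - b| ≤ c) : ‖u‖ = 1 := by
  have hh : |h u| ≤ 1 := by
    rw [H.abs_apply_of_vertex hf hg]
    exact div_le_one_of_le₀ hab H.pos_trd.le
  rw [H.norm_eq, hf, hg, abs_neg, abs_one, max_eq_left hh, max_self]

theorem exists_div_le_min_norm_of_vertex (H : IsHexagonalNorm f g h a b c) (hf : f u = 1)
    (hg : g u = -1) (hc : c ≤ a + b) :
    ∃ y, ‖y‖ = 1 ∧ (a + b + c) / (a + b) ≤ min ‖u + y‖ ‖u - y‖ := by
  have hab : 0 < a + b := add_pos H.pos_fst H.pos_snd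
  have hd : 0 ≤ c / (a + b) := div_nonneg H.pos_trd.le hab.le
  have ht : (a + b + c) / (a + b) = 1 + c / (a + b) := by rw [add_div, div_self hab.ne']
  -- Equality in `mul_abs_add_mul_abs_le` at `u` forces `h y = -1`; then `f y = g y` balances the
  -- two terms of the minimum.
  obtain ⟨y, hfy, hgy, hhy⟩ := H.exists_eq (c / (a + b)) (c / (a + b)) (-1) (by field_simp; ring)
  refine ⟨y, ?_, le_min ?_ ?_⟩
  · rw [H.norm_eq, hfy, hgy, hhy, abs_neg, abs_one, abs_of_nonneg hd,
      max_eq_right (div_le_one_of_le₀ hc hab.le), max_eq_right (div_le_one_of_le₀ hc hab.le)]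
  · calc (a + b + c) / (a + b) = f (u + y) := by rw [map_add, hf, hfy, ht]
      _ ≤ ‖u + y‖ := (le_abs_self _).trans (H.abs_apply_le_norm _)
  · calc (a + b + c) / (a + b) = -g (u - y) := by rw [map_sub, hg, hgy, ht]; ring
      _ ≤ ‖u - y‖ := (neg_le_abs _).trans (H.swap.abs_apply_le_norm _)

theorem localJamesConstant_of_vertex (H : IsHexagonalNorm f g h a b c) (hf : f u = 1)
    (hg : g u = -1) (hab : |a ^ 2 - b ^ 2| ≤ c ^ 2) (hc : c ≤ a + b) :
    localJamesConstant u = (a + b + c) / (a + b) := by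
  have hpos : 0 < a + b := add_pos H.pos_fst H.pos_snd
  have hcpos := H.pos_trd
  have hdiff : |a - b| / c ≤ c / (a + b) := by
    rw [div_le_div_iff₀ hcpos hpos, ← sq]
    calc |a - b| * (a + b) = |a ^ 2 - b ^ 2| := by
          rw [sq_sub_sq, abs_mul, abs_of_pos hpos, mul_comm]
      _ ≤ c ^ 2 := hab
  have hu : ‖u‖ ≤ 1 := (H.norm_eq_one_of_vertex hf hg <|
    (div_le_one hcpos).1 (hdiff.trans (div_le_one_of_le₀ hc hpos.le))).le
  have hh : |h u| + 1 ≤ (a + b + c) / (a + b) := by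
    rw [H.abs_apply_of_vertex hf hg, add_div, div_self hpos.ne', add_comm]
    gcongr
  refine localJamesConstant_eq_of_forall_le_of_exists_ge (fun y hy => ?_)
    (H.exists_div_le_min_norm_of_vertex hf hg hc)
  have hhy : |h y| ≤ 1 := (H.rotate.rotate.abs_apply_le_norm y).trans hy.le
  refine H.min_norm_le_of_abs_apply_le hu hy.le H.one_le_add_div_add
    (div_mul_cancel₀ _ hpos.ne').ge ?_ ?_
  · rw [map_add]
    linarith [abs_add_le (h u) (h y)]
  · rw [map_sub]
    linarith [abs_sub (h u) (h y)]

theorem jamesConstant_eq (H : IsHexagonalNorm f g h a b c) (hac : a ≤ c) (hbc : b ≤ c)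
    (hc : c ≤ a + b) : jamesConstant X = (a + b + c) / (a + b) := by
  obtain ⟨u, hf, hg, -⟩ := H.exists_eq 1 (-1) ((b - a) / c) (by
    have hcpos := H.pos_trd
    field_simp
    ring)
  have hab : |a - b| ≤ c := abs_le.2 ⟨by linarith [H.pos_fst], by linarith [H.pos_snd]⟩
  obtain ⟨y, hy, hle⟩ := H.exists_div_le_min_norm_of_vertex hf hg hc
  exact jamesConstant_eq_of_forall_le_of_exists_ge
    (fun x y hx hy => H.min_norm_le hac hbc hx.le hy.le)
    ⟨u, y, H.norm_eq_one_of_vertex hf hg hab, hy, hle⟩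

end IsHexagonalNorm

theorem isHexagonalNorm_of_norm_eq {X : Type*} [SeminormedAddCommGroup X] [Module ℝ X]
    (φ : X ≃ₗ[ℝ] ℝ × ℝ)
    (hnorm : ∀ u : X, ‖u‖ = max |(φ u).1|
      (max (|2 * (φ u).1 + (φ u).2| / 3) (|2 * (φ u).1 - 3 * (φ u).2| / 5))) :
    IsHexagonalNorm (LinearMap.fst ℝ ℝ ℝ ∘ₗ φ.toLinearMap)
      ((-(5⁻¹ : ℝ) • ((2 : ℝ) • LinearMap.fst ℝ ℝ ℝ - (3 : ℝ) • LinearMap.snd ℝ ℝ ℝ)) ∘ₗ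
        φ.toLinearMap)
      ((-(3⁻¹ : ℝ) • ((2 : ℝ) • LinearMap.fst ℝ ℝ ℝ + LinearMap.snd ℝ ℝ ℝ)) ∘ₗ φ.toLinearMap)
      8 5 9 where
  norm_eq u := by
    rw [hnorm, max_comm (_ / 3)]
    simp [abs_mul, div_eq_inv_mul, -smul_add]
  pos_fst := by norm_num
  pos_snd := by norm_num
  pos_trd := by norm_num
  relation u := by
    change 8 * (φ u).1 + 5 * (-5⁻¹ * (2 * (φ u).1 - 3 * (φ u).2)) +
      9 * (-3⁻¹ * (2 * (φ u).1 + (φ u).2)) = 0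
    ring
  exists_eq p q r hpqr := by
    refine ⟨φ.symm (p, (5 * q + 2 * p) / 3), ?_, ?_, ?_⟩ <;> simp <;> linarith

theorem stmt11_general {X : Type*} [SeminormedAddCommGroup X] [Module ℝ X]
    {f g h : Module.Dual ℝ X} {a b c : ℝ} (H : IsHexagonalNorm f g h a b c)
    (hac : a ≤ c) (hbc : b ≤ c) (hnonobtuse : c ^ 2 ≤ a ^ 2 + b ^ 2) {u v w : X}
    (hfu : f u = 1) (hgu : g u = -1) (hfv : f v = 1) (hhv : h v = -1)
    (hgw : g w = 1) (hhw : h w = -1) :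
    localJamesConstant u = (a + b + c) / (a + b) ∧
    localJamesConstant v = (a + c + b) / (a + c) ∧
    localJamesConstant w = (b + c + a) / (b + c) ∧
    jamesConstant X = (a + b + c) / (a + b) := by
  have ha := H.pos_fst
  have hb := H.pos_snd
  have hcab : c ≤ a + b := by nlinarith [mul_pos ha hb]
  have hac_sq : a ^ 2 ≤ c ^ 2 := by gcongr
  have hbc_sq : b ^ 2 ≤ c ^ 2 := by gcongr
  exact ⟨H.localJamesConstant_of_vertex hfu hgu (abs_le.2 ⟨by linarith, by linarith⟩) hcab,
    H.rotate.rotate.swap.localJamesConstant_of_vertex hfv hhv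
      (abs_le.2 ⟨by linarith, by linarith⟩) (by linarith),
    H.rotate.localJamesConstant_of_vertex hgw hhw
      (abs_le.2 ⟨by linarith, by linarith⟩) (by linarith),
    H.jamesConstant_eq hac hbc hcab⟩

/-- Let `X` be `ℝ²` (here: a real Banach space linearly identified with `ℝ²`
via `φ`) equipped with the norm `‖(x, y)‖ = max {|x|, |2x + y|/3, |2x - 3y|/5}`, whose unit ball
is the hexagon with vertices `±(1, -1)`, `±(1, 1)`, `±(1/2, 2)`. Then `β((1,-1)) = 22/13`,
`β((1,1)) = 22/17`, `β((1/2,2)) = 11/7`, and consequently `J(X) = 22/13`. -/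
theorem stmt11 {X : Type*} [NormedAddCommGroup X] [NormedSpace ℝ X] [CompleteSpace X]
    (φ : X ≃ₗ[ℝ] ℝ × ℝ)
    (hnorm : ∀ u : X, ‖u‖ = max |(φ u).1|
      (max (|2 * (φ u).1 + (φ u).2| / 3) (|2 * (φ u).1 - 3 * (φ u).2| / 5))) :
    sSup {r : ℝ | ∃ y : X, ‖y‖ = 1 ∧
        r = min ‖φ.symm (1, -1) + y‖ ‖φ.symm (1, -1) - y‖} = 22 / 13 ∧
    sSup {r : ℝ | ∃ y : X, ‖y‖ = 1 ∧
        r = min ‖φ.symm (1, 1) + y‖ ‖φ.symm (1, 1) - y‖} = 22 / 17 ∧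
    sSup {r : ℝ | ∃ y : X, ‖y‖ = 1 ∧
        r = min ‖φ.symm (1 / 2, 2) + y‖ ‖φ.symm (1 / 2, 2) - y‖} = 11 / 7 ∧
    sSup {r : ℝ | ∃ x y : X, ‖x‖ = 1 ∧ ‖y‖ = 1 ∧ r = min ‖x + y‖ ‖x - y‖} = 22 / 13 := by
  have hconstants := stmt11_general (isHexagonalNorm_of_norm_eq φ hnorm)
    (u := φ.symm (1, -1)) (v := φ.symm (1, 1)) (w := φ.symm (1 / 2, 2))
  norm_num at hconstants
  exact hconstants
end
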